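/- For any set I_x ⊆ G_x of representatives of the left cosets of G_{xy} in G_x and any set I_y ⊆ G_y of representatives of the left cosets of G_{xy} in G_y, the subgroup of G generated by I_x ∪ I_y acts transitively on the orbit: for every (u,v) ∈ 𝒪 there exists σ in this subgroup with (σ(x), σ(y)) = (u,v). -/

import Mathlib

open IntermediateField
open scoped BigOperators Classical

set_option synthInstance.maxHeartbeats 1000000
set_option maxHeartbeats 1600000

noncomputable section

namespace QuadrantWalk

variable {K : Type} [Field K] [Algebra ℂ K]

/-- Evaluation of the step (Laurent) polynomial `S(X,Y) = ∑ w_{i,j} X^i Y^j`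
    at a pair of elements of a field. -/
def stepEval (St : Finset (ℤ × ℤ)) (w : ℤ × ℤ → ℂ) (u v : K) : K :=
  ∑ p ∈ St, algebraMap ℂ K (w p) * u ^ p.1 * v ^ p.2

/-- The step polynomial involves both `X` and `Y`. -/
def NotUnivariate (St : Finset (ℤ × ℤ)) : Prop :=
  (∃ p ∈ St, ∃ q ∈ St, p.1 ≠ q.1) ∧ ∃ p ∈ St, ∃ q ∈ St, p.2 ≠ q.2

/-- The kernel polynomial `K̃(X,Y,t) = X^mx * Y^my * (1 - t·S(X,Y))` as an element of
`ℂ[X,Y,t]`, with variables `0 ↦ X`, `1 ↦ Y`, `2 ↦ t`. -/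
def kernelPoly (St : Finset (ℤ × ℤ)) (w : ℤ × ℤ → ℂ) (mx my : ℕ) :
    MvPolynomial (Fin 3) ℂ :=
  MvPolynomial.X 0 ^ mx * MvPolynomial.X 1 ^ my -
    MvPolynomial.X 2 *
      ∑ p ∈ St, MvPolynomial.C (w p) *
        MvPolynomial.X 0 ^ (p.1 + (mx : ℤ)).toNat *
        MvPolynomial.X 1 ^ (p.2 + (my : ℤ)).toNat

/-- `-mx` (resp. `-my`) is the smallest `X`-exponent (resp. `Y`-exponent) of the model. -/
structure ExponentBounds (St : Finset (ℤ × ℤ)) (mx my : ℕ) : Prop where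
  lowerX : ∀ p ∈ St, -(mx : ℤ) ≤ p.1
  lowerY : ∀ p ∈ St, -(my : ℤ) ≤ p.2
  attainX : ∃ p ∈ St, p.1 = -(mx : ℤ)
  attainY : ∃ p ∈ St, p.2 = -(my : ℤ)

/-- `x`-adjacency : equal first coordinates and equal values of `S`. -/
def XAdj (St : Finset (ℤ × ℤ)) (w : ℤ × ℤ → ℂ) (a b : K × K) : Prop :=
  a.1 = b.1 ∧ stepEval St w a.1 a.2 = stepEval St w b.1 b.2

/-- `y`-adjacency : equal second coordinates and equal values of `S`. -/
def YAdj (St : Finset (ℤ × ℤ)) (w : ℤ × ℤ → ℂ) (a b : K × K) : Prop :=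
  a.2 = b.2 ∧ stepEval St w a.1 a.2 = stepEval St w b.1 b.2

/-- Adjacency. -/
def Adj (St : Finset (ℤ × ℤ)) (w : ℤ × ℤ → ℂ) (a b : K × K) : Prop :=
  XAdj St w a b ∨ YAdj St w a b

/-- The orbit of the walk: the equivalence class of `(x,y)` under the
reflexive-transitive closure of adjacency. -/
def orbit (St : Finset (ℤ × ℤ)) (w : ℤ × ℤ → ℂ) (x y : K) : Set (K × K) :=
  {a | Relation.ReflTransGen (Adj St w) (x, y) a}

/-- `k = ℂ(S(x,y))`. -/
def kF (St : Finset (ℤ × ℤ)) (w : ℤ × ℤ → ℂ) (x y : K) : IntermediateField ℂ K :=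
  adjoin ℂ {stepEval St w x y}

/-- `k(x) = ℂ(x, S(x,y))`. -/
def kxF (St : Finset (ℤ × ℤ)) (w : ℤ × ℤ → ℂ) (x y : K) : IntermediateField ℂ K :=
  adjoin ℂ {x, stepEval St w x y}

/-- `k(y) = ℂ(y, S(x,y))`. -/
def kyF (St : Finset (ℤ × ℤ)) (w : ℤ × ℤ → ℂ) (x y : K) : IntermediateField ℂ K :=
  adjoin ℂ {y, stepEval St w x y}

/-- `k(x,y) = ℂ(x,y)`. -/
def kxyF (x y : K) : IntermediateField ℂ K := adjoin ℂ {x, y}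

/-- `k(𝒪)`: the subfield generated over `k` by all coordinates of the orbit. -/
def orbitF (St : Finset (ℤ × ℤ)) (w : ℤ × ℤ → ℂ) (x y : K) : IntermediateField ℂ K :=
  adjoin ℂ ({stepEval St w x y} ∪ {z | ∃ a ∈ orbit St w x y, z = a.1 ∨ z = a.2})

/-- The standing hypotheses: nonzero weights, a non-univariate step polynomial,
`x, y` algebraically independent over `ℂ`, and `𝕂` an algebraic closure of `ℂ(x,y)`. -/
structure Setting (St : Finset (ℤ × ℤ)) (w : ℤ × ℤ → ℂ) (x y : K) : Prop where
  weight_ne : ∀ p ∈ St, w p ≠ 0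
  notUniv : NotUnivariate St
  indep : AlgebraicIndependent ℂ ![x, y]
  algClosed : IsAlgClosed K
  algebraic : Algebra.IsAlgebraic (kxyF x y) K

lemma self_mem_orbit (St : Finset (ℤ × ℤ)) (w : ℤ × ℤ → ℂ) (x y : K) :
    (x, y) ∈ orbit St w x y := Relation.ReflTransGen.refl

lemma x_mem_orbitF (St : Finset (ℤ × ℤ)) (w : ℤ × ℤ → ℂ) (x y : K) :
    x ∈ orbitF St w x y := by
  apply subset_adjoin
  exact Set.mem_union_right _ ⟨(x, y), self_mem_orbit St w x y, Or.inl rfl⟩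

lemma y_mem_orbitF (St : Finset (ℤ × ℤ)) (w : ℤ × ℤ → ℂ) (x y : K) :
    y ∈ orbitF St w x y := by
  apply subset_adjoin
  exact Set.mem_union_right _ ⟨(x, y), self_mem_orbit St w x y, Or.inr rfl⟩

lemma S_mem_orbitF (St : Finset (ℤ × ℤ)) (w : ℤ × ℤ → ℂ) (x y : K) :
    stepEval St w x y ∈ orbitF St w x y := by
  apply subset_adjoin
  exact Set.mem_union_left _ rfl

lemma x_mem_kxF (St : Finset (ℤ × ℤ)) (w : ℤ × ℤ → ℂ) (x y : K) :
    x ∈ kxF St w x y :=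
  subset_adjoin ℂ _ (Set.mem_insert _ _)

lemma S_mem_kxF (St : Finset (ℤ × ℤ)) (w : ℤ × ℤ → ℂ) (x y : K) :
    stepEval St w x y ∈ kxF St w x y :=
  subset_adjoin ℂ _ (Set.mem_insert_of_mem _ rfl)

lemma y_mem_kyF (St : Finset (ℤ × ℤ)) (w : ℤ × ℤ → ℂ) (x y : K) :
    y ∈ kyF St w x y :=
  subset_adjoin ℂ _ (Set.mem_insert _ _)

lemma S_mem_kyF (St : Finset (ℤ × ℤ)) (w : ℤ × ℤ → ℂ) (x y : K) :
    stepEval St w x y ∈ kyF St w x y :=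
  subset_adjoin ℂ _ (Set.mem_insert_of_mem _ rfl)

/-- The subgroup of `ℂ`-automorphisms of `M` fixing the subfield `E` pointwise. -/
def fixingAuts (E M : IntermediateField ℂ K) : Subgroup (↥M ≃ₐ[ℂ] ↥M) where
  carrier := {σ | ∀ (z : K) (_ : z ∈ E) (hzM : z ∈ M), σ ⟨z, hzM⟩ = ⟨z, hzM⟩}
  one_mem' := fun _ _ _ => rfl
  mul_mem' := by
    intro σ τ hσ hτ z hzE hzM
    show σ (τ ⟨z, hzM⟩) = ⟨z, hzM⟩
    rw [hτ z hzE hzM, hσ z hzE hzM]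
  inv_mem' := by
    intro σ hσ z hzE hzM
    show σ.symm ⟨z, hzM⟩ = ⟨z, hzM⟩
    conv_lhs => rw [← hσ z hzE hzM]
    exact σ.symm_apply_apply _

/-- The Galois group `G_x = Gal(k(𝒪)|k(x))`. -/
def Gx (St : Finset (ℤ × ℤ)) (w : ℤ × ℤ → ℂ) (x y : K) :
    Subgroup (↥(orbitF St w x y) ≃ₐ[ℂ] ↥(orbitF St w x y)) :=
  fixingAuts (kxF St w x y) (orbitF St w x y)

/-- The Galois group `G_y = Gal(k(𝒪)|k(y))`. -/
def Gy (St : Finset (ℤ × ℤ)) (w : ℤ × ℤ → ℂ) (x y : K) :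
    Subgroup (↥(orbitF St w x y) ≃ₐ[ℂ] ↥(orbitF St w x y)) :=
  fixingAuts (kyF St w x y) (orbitF St w x y)

/-- The Galois group `G_{xy} = Gal(k(𝒪)|k(x,y))`. -/
def Gxy (St : Finset (ℤ × ℤ)) (w : ℤ × ℤ → ℂ) (x y : K) :
    Subgroup (↥(orbitF St w x y) ≃ₐ[ℂ] ↥(orbitF St w x y)) :=
  fixingAuts (kxyF x y) (orbitF St w x y)

/-- Extend an automorphism of an intermediate field to a map on all of `K`
(by the identity outside). -/
def extendAut {M : IntermediateField ℂ K} (σ : ↥M ≃ₐ[ℂ] ↥M) (z : K) : K :=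
  if h : z ∈ M then (σ ⟨z, h⟩ : K) else z

/-- The coordinate-wise action of an automorphism on a `0`-chain. -/
def actChain {M : IntermediateField ℂ K} (σ : ↥M ≃ₐ[ℂ] ↥M)
    (γ : (K × K) →₀ ℂ) : (K × K) →₀ ℂ :=
  Finsupp.mapDomain (Prod.map (extendAut σ) (extendAut σ)) γ

/-- Evaluation of a polynomial `P(X,Y,t)` at `(u, v, 1/S(x,y))` for `(u,v) = a`. -/
def evalPt (St : Finset (ℤ × ℤ)) (w : ℤ × ℤ → ℂ) (x y : K)
    (P : MvPolynomial (Fin 3) ℂ) (a : K × K) : K :=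
  MvPolynomial.aeval ![a.1, a.2, (stepEval St w x y)⁻¹] P

/-- Evaluation of a polynomial `P(X,Y,t)` at `(x, y, 1/S(x,y))`. -/
def evalXY (St : Finset (ℤ × ℤ)) (w : ℤ × ℤ → ℂ) (x y : K)
    (P : MvPolynomial (Fin 3) ℂ) : K :=
  evalPt St w x y P (x, y)

/-- Evaluation of the fraction `A/B` at `(a.1, a.2, 1/S(x,y))`. -/
def fracEval (St : Finset (ℤ × ℤ)) (w : ℤ × ℤ → ℂ) (x y : K)
    (A B : MvPolynomial (Fin 3) ℂ) (a : K × K) : K :=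
  evalPt St w x y A a / evalPt St w x y B a

/-- Evaluation (orbit sum) of the fraction `A/B` on a `0`-chain. -/
def chainEval (St : Finset (ℤ × ℤ)) (w : ℤ × ℤ → ℂ) (x y : K)
    (A B : MvPolynomial (Fin 3) ℂ) (γ : (K × K) →₀ ℂ) : K :=
  γ.sum fun a c => algebraMap ℂ K c * fracEval St w x y A B a

/-- A `0`-chain cancels decoupled fractions: the orbit sum of every regular fraction
of the form `F(X,t) + G(Y,t)` on it vanishes. -/
def CancelsDecoupled (St : Finset (ℤ × ℤ)) (w : ℤ × ℤ → ℂ) (mx my : ℕ)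
    (x y : K) (α : (K × K) →₀ ℂ) : Prop :=
  ∀ A₁ B₁ A₂ B₂ : MvPolynomial (Fin 3) ℂ,
    A₁ ∈ MvPolynomial.supported ℂ ({0, 2} : Set (Fin 3)) →
    B₁ ∈ MvPolynomial.supported ℂ ({0, 2} : Set (Fin 3)) →
    A₂ ∈ MvPolynomial.supported ℂ ({1, 2} : Set (Fin 3)) →
    B₂ ∈ MvPolynomial.supported ℂ ({1, 2} : Set (Fin 3)) →
    ¬ kernelPoly St w mx my ∣ B₁ → ¬ kernelPoly St w mx my ∣ B₂ →
    (α.sum fun a c =>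
      algebraMap ℂ K c * (fracEval St w x y A₁ B₁ a + fracEval St w x y A₂ B₂ a)) = 0

/-- The field of fractions `ℂ(X,Y,t)`. -/
abbrev FF : Type := FractionRing (MvPolynomial (Fin 3) ℂ)

/-- The inclusion of `ℂ[X,Y,t]` into `ℂ(X,Y,t)`. -/
def toFF (P : MvPolynomial (Fin 3) ℂ) : FF := algebraMap (MvPolynomial (Fin 3) ℂ) FF P

/-- The regular fraction `A/B` admits a Galois decoupling:
`A/B = F + G + K̃·R` with `F ∈ ℂ(X,t)`, `G ∈ ℂ(Y,t)` and `R` regular. -/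
def AdmitsDecoupling (St : Finset (ℤ × ℤ)) (w : ℤ × ℤ → ℂ) (mx my : ℕ)
    (A B : MvPolynomial (Fin 3) ℂ) : Prop :=
  ∃ F₁ F₂ G₁ G₂ R₁ R₂ : MvPolynomial (Fin 3) ℂ,
    F₁ ∈ MvPolynomial.supported ℂ ({0, 2} : Set (Fin 3)) ∧
    F₂ ∈ MvPolynomial.supported ℂ ({0, 2} : Set (Fin 3)) ∧
    G₁ ∈ MvPolynomial.supported ℂ ({1, 2} : Set (Fin 3)) ∧
    G₂ ∈ MvPolynomial.supported ℂ ({1, 2} : Set (Fin 3)) ∧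
    ¬ kernelPoly St w mx my ∣ F₂ ∧ ¬ kernelPoly St w mx my ∣ G₂ ∧
    ¬ kernelPoly St w mx my ∣ R₂ ∧
    toFF A / toFF B =
      toFF F₁ / toFF F₂ + toFF G₁ / toFF G₂ +
        toFF (kernelPoly St w mx my) * (toFF R₁ / toFF R₂)

/-- `(I, J) = (A/B, Cc/D)` is a pair of Galois invariants: `I - J = K̃·R` with `R` regular. -/
def IsInvariantPair (St : Finset (ℤ × ℤ)) (w : ℤ × ℤ → ℂ) (mx my : ℕ)
    (A B Cc D : MvPolynomial (Fin 3) ℂ) : Prop :=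
  ∃ R₁ R₂ : MvPolynomial (Fin 3) ℂ, ¬ kernelPoly St w mx my ∣ R₂ ∧
    toFF A / toFF B - toFF Cc / toFF D =
      toFF (kernelPoly St w mx my) * (toFF R₁ / toFF R₂)

/-- A constant pair of Galois invariants: both members are equivalent to a
common fraction `c ∈ ℂ(t)` modulo `K̃`. -/
def IsConstantPair (St : Finset (ℤ × ℤ)) (w : ℤ × ℤ → ℂ) (mx my : ℕ)
    (A B Cc D : MvPolynomial (Fin 3) ℂ) : Prop :=
  IsInvariantPair St w mx my A B Cc D ∧
  ∃ c₁ c₂ : MvPolynomial (Fin 3) ℂ,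
    c₁ ∈ MvPolynomial.supported ℂ ({2} : Set (Fin 3)) ∧
    c₂ ∈ MvPolynomial.supported ℂ ({2} : Set (Fin 3)) ∧ c₂ ≠ 0 ∧
    IsInvariantPair St w mx my A B c₁ c₂ ∧ IsInvariantPair St w mx my Cc D c₁ c₂

/-- `(γx, γy)` is a pseudo-decoupling of `(x,y)`. -/
def PseudoDecoupling (St : Finset (ℤ × ℤ)) (w : ℤ × ℤ → ℂ) (mx my : ℕ)
    (x y : K) (γx γy : (K × K) →₀ ℂ) : Prop :=
  ∀ A B : MvPolynomial (Fin 3) ℂ, ¬ kernelPoly St w mx my ∣ B →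
    AdmitsDecoupling St w mx my A B →
      fracEval St w x y A B (x, y) =
          chainEval St w x y A B γx + chainEval St w x y A B γy ∧
        chainEval St w x y A B γx ∈ kxF St w x y ∧
        chainEval St w x y A B γy ∈ kyF St w x y

/-- `(gx, gy, a)` is a decoupling of `(x,y)` in the orbit. -/
def IsDecoupling (St : Finset (ℤ × ℤ)) (w : ℤ × ℤ → ℂ) (mx my : ℕ)
    (x y : K) (gx gy a : (K × K) →₀ ℂ) : Prop :=
  Finsupp.single (x, y) (1 : ℂ) = gx + gy + a ∧
  (∀ σ ∈ Gx St w x y, actChain σ gx = gx) ∧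
  (∀ σ ∈ Gy St w x y, actChain σ gy = gy) ∧
  CancelsDecoupled St w mx my x y a

/-- The `x`-part of the boundary of a `1`-chain. -/
def boundaryX (St : Finset (ℤ × ℤ)) (w : ℤ × ℤ → ℂ)
    (c : ((K × K) × (K × K)) →₀ ℂ) : (K × K) →₀ ℂ :=
  c.sum fun e coeff =>
    if XAdj St w e.1 e.2 then
      coeff • (Finsupp.single e.2 (1 : ℂ) - Finsupp.single e.1 (1 : ℂ)) else 0

/-- The `y`-part of the boundary of a `1`-chain. -/
def boundaryY (St : Finset (ℤ × ℤ)) (w : ℤ × ℤ → ℂ)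
    (c : ((K × K) × (K × K)) →₀ ℂ) : (K × K) →₀ ℂ :=
  c.sum fun e coeff =>
    if YAdj St w e.1 e.2 then
      coeff • (Finsupp.single e.2 (1 : ℂ) - Finsupp.single e.1 (1 : ℂ)) else 0

/-- The `0`-chain induced by a bicolored loop. -/
def IsBicoloredChain (St : Finset (ℤ × ℤ)) (w : ℤ × ℤ → ℂ) (x y : K)
    (α : (K × K) →₀ ℂ) : Prop :=
  ∃ (n : ℕ) (b : ℕ → K × K), 0 < n ∧ b (2 * n) = b 0 ∧
    (∀ j < 2 * n, b j ∈ orbit St w x y) ∧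
    (∀ i < n, XAdj St w (b (2 * i)) (b (2 * i + 1)) ∧
      YAdj St w (b (2 * i + 1)) (b (2 * i + 2))) ∧
    α = ∑ j ∈ Finset.range (2 * n), ((-1 : ℂ) ^ (j + 1)) • Finsupp.single (b j) (1 : ℂ)

/-- The `0`-chain `ω = (1/|𝒪|) ∑_{a ∈ 𝒪} a`. -/
def omegaChain (St : Finset (ℤ × ℤ)) (w : ℤ × ℤ → ℂ) (x y : K)
    (h : (orbit St w x y).Finite) : (K × K) →₀ ℂ :=
  ((h.toFinset.card : ℂ))⁻¹ • ∑ a ∈ h.toFinset, Finsupp.single a (1 : ℂ)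

/-- The average `[G]·γ = (1/|G|) ∑_{σ ∈ G} σ·γ` of a `0`-chain under a group. -/
def groupAverage {M : IntermediateField ℂ K} (G : Subgroup (↥M ≃ₐ[ℂ] ↥M))
    (γ : (K × K) →₀ ℂ) : (K × K) →₀ ℂ :=
  ((Nat.card G : ℂ))⁻¹ • ∑ᶠ σ ∈ (G : Set (↥M ≃ₐ[ℂ] ↥M)), actChain σ γ

/-- `ℂ[X,t]` (two variables: `0` and `1`). -/
abbrev MvP2 : Type := MvPolynomial (Fin 2) ℂ

/-- `ℂ(X,t)`, the fraction field of `ℂ[X,t]`. -/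
abbrev CXt : Type := FractionRing MvP2

/-- Constants `ℂ → ℂ(X,t)`. -/
def cconst : ℂ →+* CXt := (algebraMap MvP2 CXt).comp (MvPolynomial.C)

/-- The first generator of `ℂ(X,t)`. -/
def gen0 : CXt := algebraMap MvP2 CXt (MvPolynomial.X 0)

/-- The second generator of `ℂ(X,t)`. -/
def gen1 : CXt := algebraMap MvP2 CXt (MvPolynomial.X 1)

/-- The kernel polynomial viewed as a polynomial in `Y` over `ℂ(X,t)`. -/
def kernelInY (St : Finset (ℤ × ℤ)) (w : ℤ × ℤ → ℂ) (mx my : ℕ) :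
    Polynomial CXt :=
  MvPolynomial.eval₂ ((Polynomial.C : CXt →+* Polynomial CXt).comp cconst)
    ![Polynomial.C gen0, Polynomial.X, Polynomial.C gen1]
    (kernelPoly St w mx my)

/-- The kernel polynomial viewed as a polynomial in `X` over `ℂ(Y,t)`. -/
def kernelInX (St : Finset (ℤ × ℤ)) (w : ℤ × ℤ → ℂ) (mx my : ℕ) :
    Polynomial CXt :=
  MvPolynomial.eval₂ ((Polynomial.C : CXt →+* Polynomial CXt).comp cconst)
    ![Polynomial.X, Polynomial.C gen0, Polynomial.C gen1]
    (kernelPoly St w mx my)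

/-- The kernel polynomial viewed as a polynomial in `X, Y` over `ℂ(t)`. -/
def kernelInXY (St : Finset (ℤ × ℤ)) (w : ℤ × ℤ → ℂ) (mx my : ℕ) :
    MvPolynomial (Fin 2) (RatFunc ℂ) :=
  MvPolynomial.eval₂
    ((MvPolynomial.C : RatFunc ℂ →+* MvPolynomial (Fin 2) (RatFunc ℂ)).comp
      (RatFunc.C : ℂ →+* RatFunc ℂ))
    ![MvPolynomial.X 0, MvPolynomial.X 1, MvPolynomial.C RatFunc.X]
    (kernelPoly St w mx my)

/-- The specialization `K̃(x, Y, 1/S(x,y))` as a polynomial in `Y` over `k(x)`. -/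
def kernelAtX (St : Finset (ℤ × ℤ)) (w : ℤ × ℤ → ℂ) (mx my : ℕ) (x y : K) :
    Polynomial ↥(kxF St w x y) :=
  MvPolynomial.aeval
    ![Polynomial.C (⟨x, x_mem_kxF St w x y⟩ : kxF St w x y), Polynomial.X,
      Polynomial.C (⟨(stepEval St w x y)⁻¹, inv_mem (S_mem_kxF St w x y)⟩ : kxF St w x y)]
    (kernelPoly St w mx my)

/-- The specialization `K̃(X, y, 1/S(x,y))` as a polynomial in `X` over `k(y)`. -/
def kernelAtY (St : Finset (ℤ × ℤ)) (w : ℤ × ℤ → ℂ) (mx my : ℕ) (x y : K) :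
    Polynomial ↥(kyF St w x y) :=
  MvPolynomial.aeval
    ![Polynomial.X, Polynomial.C (⟨y, y_mem_kyF St w x y⟩ : kyF St w x y),
      Polynomial.C (⟨(stepEval St w x y)⁻¹, inv_mem (S_mem_kyF St w x y)⟩ : kyF St w x y)]
    (kernelPoly St w mx my)

/-- Values of regular fractions with numerator and denominator supported on a set
of variables. -/
def regRange (St : Finset (ℤ × ℤ)) (w : ℤ × ℤ → ℂ) (x y : K) (mx my : ℕ)
    (s : Set (Fin 3)) : Set K :=
  {z | ∃ A B : MvPolynomial (Fin 3) ℂ,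
    A ∈ MvPolynomial.supported ℂ s ∧ B ∈ MvPolynomial.supported ℂ s ∧
    ¬ kernelPoly St w mx my ∣ B ∧ z = evalXY St w x y A / evalXY St w x y B}

end QuadrantWalk
namespace QuadrantWalk

/-!
Since `S` involves `Y`, the value `S(x,y)` is transcendental over `ℂ(x)`, and hence so is every `v`
with `S(x,v) = S(x,y)`. In an algebraically closed field, two elements that are transcendental over
a subfield are conjugate over it: an automorphism of `𝕂` over `ℂ(x)` takes `y` to `v`. It preserves
the orbit, so its restriction to `k(𝒪)` lies in `G_x` and takes `(x,y)` to `(x,v)`. The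
representative of its coset modulo `G_{xy}` does the same. Exchanging the variables handles
`y`-adjacency. So the subgroup reaches all neighbours of `(x,y)` and, as it preserves adjacency,
the whole connected component of `(x,y)`.
-/

section LaurentPowers

lemma linearIndependent_pow_of_transcendental {R A : Type*} [CommRing R] [Ring A] [Algebra R A]
    {t : A} (ht : Transcendental R t) : LinearIndependent R (fun n : ℕ => t ^ n) := by
  simpa [Function.comp_def] using (Polynomial.basisMonomials R).linearIndependent.map'
    (Polynomial.aeval t).toLinearMap (LinearMap.ker_eq_bot.2 (transcendental_iff_injective.1 ht))

variable {R K : Type*} [CommRing R] [Nontrivial R] [DivisionRing K] [Algebra R K] {t : K}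

lemma linearIndependent_zpow_of_transcendental (ht : Transcendental R t) :
    LinearIndependent R (fun n : ℤ => t ^ n) := by
  have ht0 : t ≠ 0 := fun h => ht (h ▸ isAlgebraic_zero)
  refine linearIndependent_iff_finset_linearIndependent.2 fun s => ?_
  obtain ⟨N, hN⟩ : ∃ N : ℕ, ∀ n ∈ s, 0 ≤ n + N :=
    ⟨∑ n ∈ s, n.natAbs, fun n hn => by
      have := Finset.single_le_sum (f := Int.natAbs) (fun _ _ => Nat.zero_le _) hn
      omega⟩
  have shift : LinearMap.mulLeft R (t ^ N) ∘ (fun n : ℤ => t ^ n) ∘ ((↑) : s → ℤ) =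
      (fun k : ℕ => t ^ k) ∘ fun n : s => (n + N : ℤ).toNat := by
    ext ⟨n, hn⟩
    simp only [Function.comp_apply, LinearMap.mulLeft_apply, ← zpow_natCast,
      Int.toNat_of_nonneg (hN n hn), ← zpow_add₀ ht0, add_comm]
  refine LinearIndependent.of_comp (LinearMap.mulLeft R (t ^ N)) ?_
  rw [shift]
  refine (linearIndependent_pow_of_transcendental ht).comp _ fun m n hmn => Subtype.ext ?_
  have := hN m m.2
  have := hN n n.2
  have : (m + N : ℤ).toNat = (n + N : ℤ).toNat := hmn
  omega

lemma sum_smul_zpow_ne_zero (ht : Transcendental R t) {s : Finset (ℤ × ℤ)} {w : ℤ × ℤ → R}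
    {p : ℤ × ℤ} (hp : p ∈ s) (hwp : w p ≠ 0) :
    ∑ q ∈ s with q.2 = p.2, w q • t ^ q.1 ≠ 0 := by
  let c : ℤ →₀ R := ∑ q ∈ s with q.2 = p.2, Finsupp.single q.1 (w q)
  have c_apply : c p.1 = w p := by
    simp only [c, Finsupp.finsetSum_apply, Finsupp.single_apply]
    refine (Finset.sum_eq_single_of_mem p ?_ fun q hq hqp => if_neg fun h => ?_).trans (if_pos rfl)
    · exact Finset.mem_filter.2 ⟨hp, rfl⟩
    · exact hqp (Prod.ext h (Finset.mem_filter.1 hq).2)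
  have c_value : Finsupp.linearCombination R (fun n : ℤ => t ^ n) c =
      ∑ q ∈ s with q.2 = p.2, w q • t ^ q.1 := by
    simp only [c, map_sum, Finsupp.linearCombination_single]
  rw [← c_value]
  intro h
  have hc : c = 0 := linearIndependent_zpow_of_transcendental ht (h.trans (map_zero _).symm)
  exact hwp (by rw [← c_apply, hc, Finsupp.zero_apply])

lemma transcendental_linearCombination_zpow {F L : Type*} [Field F] [Field L] [Algebra F L]
    {t : L} (ht : Transcendental F t) {c : ℤ →₀ F} {n : ℤ} (hn : n ≠ 0) (hc : c n ≠ 0) :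
    Transcendental F (Finsupp.linearCombination F (fun m : ℤ => t ^ m) c) := by
  -- Over the algebraic closure of `F` in `L`, where `t` is still transcendental, an algebraic
  -- value would be the constant coefficient of a second expansion in powers of `t`.
  intro hs
  let M := algebraicClosure F L
  let s : M := ⟨_, mem_algebraicClosure_iff.2 hs⟩
  let c' : ℤ →₀ M := c.mapRange (algebraMap F M) (map_zero _)
  have hs_eq : Finsupp.linearCombination M (fun m : ℤ => t ^ m) c' =
      Finsupp.linearCombination M (fun m : ℤ => t ^ m) (Finsupp.single 0 s) := by
    rw [Finsupp.linearCombination_single, zpow_zero, Finsupp.linearCombination_apply,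
      Finsupp.sum_mapRange_index fun m => zero_smul M (t ^ m)]
    simp only [algebraMap_smul]
    exact (mul_one _).symm
  have hcoeff : c' n = 0 := by
    rw [linearIndependent_zpow_of_transcendental ht.algebraicClosure hs_eq]
    exact Finsupp.single_eq_of_ne hn
  exact hc ((algebraMap F M).injective (hcoeff.trans (map_zero _).symm))

end LaurentPowers

section Conjugation

variable {R K : Type*} [CommRing R] [Field K] [Algebra R K]

lemma exists_algEquiv_of_isTranscendenceBasis {ι L : Type*} [Field L] [Algebra R L]
    [IsAlgClosed K] [IsAlgClosed L] {u : ι → K} {v : ι → L}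
    (hu : IsTranscendenceBasis R u) (hv : IsTranscendenceBasis R v) :
    ∃ φ : K ≃ₐ[R] L, ∀ i, φ (u i) = v i := by
  have := IsAlgClosed.isAlgClosure_of_transcendence_basis u hu
  have := IsAlgClosed.isAlgClosure_of_transcendence_basis v hv
  let e := hu.1.aevalEquiv.symm.trans hv.1.aevalEquiv
  let φ := IsAlgClosure.equivOfEquiv K L e.toRingEquiv
  have φ_eq (p : MvPolynomial ι R) : φ (MvPolynomial.aeval u p) = MvPolynomial.aeval v p := by
    have := IsAlgClosure.equivOfEquiv_algebraMap K L e.toRingEquiv (hu.1.aevalEquiv p)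
    simpa [e] using this
  refine ⟨AlgEquiv.ofRingEquiv (f := φ) fun r => ?_, fun i => ?_⟩
  · simpa using φ_eq (MvPolynomial.C r)
  · simpa using φ_eq (MvPolynomial.X i)

lemma exists_isTranscendenceBasis_mem {t : K} (ht : Transcendental R t) :
    ∃ s : Set K, t ∈ s ∧ IsTranscendenceBasis R ((↑) : s → K) := by
  have ht' : AlgebraicIndepOn R id {t} := algebraicIndependent_unique_type_iff.2 ht
  obtain ⟨s, hts, hs⟩ := exists_isTranscendenceBasis_superset ht'
  exact ⟨s, hts rfl, hs⟩

lemma exists_algEquiv_apply_eq_of_transcendental [Nontrivial R] [IsAlgClosed K] {u v : K}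
    (hu : Transcendental R u) (hv : Transcendental R v) : ∃ φ : K ≃ₐ[R] K, φ u = v := by
  obtain ⟨s, hus, hs⟩ := exists_isTranscendenceBasis_mem hu
  obtain ⟨t, hvt, ht⟩ := exists_isTranscendenceBasis_mem hv
  obtain ⟨e₀⟩ := Cardinal.eq.1 (hs.cardinalMk_eq ht)
  let e := e₀.trans (Equiv.swap (e₀ ⟨u, hus⟩) ⟨v, hvt⟩)
  have e_apply : e ⟨u, hus⟩ = ⟨v, hvt⟩ := Equiv.swap_apply_left _ _
  obtain ⟨φ, hφ⟩ := exists_algEquiv_of_isTranscendenceBasis hs (ht.comp_equiv e)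
  exact ⟨φ, (hφ ⟨u, hus⟩).trans (congrArg Subtype.val e_apply)⟩

lemma algebraicIndependent_pair_swap {x y : K} (h : AlgebraicIndependent R ![x, y]) :
    AlgebraicIndependent R ![y, x] := by
  convert! h.comp (Equiv.swap 0 1) (Equiv.injective _) using 1
  ext i
  fin_cases i <;> rfl

lemma transcendental_adjoin_of_pair {F : Type*} [Field F] [Algebra F K] {x y : K}
    (h : AlgebraicIndependent F ![x, y]) : Transcendental F⟮x⟯ y := by
  have := h.transcendental_adjoin (s := {0}) (i := 1) (by simp)
  rw [Set.image_singleton] at this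
  exact IntermediateField.transcendental_adjoin_iff.2 this

end Conjugation

section Action

variable {G α : Type*} [Group G] [MulAction G α] {r : α → α → Prop}

lemma exists_smul_eq_of_reflTransGen (hr : ∀ (g : G) {a b}, r a b → r (g • a) (g • b))
    {H : Subgroup G} {a b : α} (h : ∀ c, r a c → ∃ g ∈ H, g • a = c)
    (hab : Relation.ReflTransGen r a b) : ∃ g ∈ H, g • a = b := by
  induction hab with
  | refl => exact ⟨1, one_mem H, one_smul G a⟩
  | tail _ hbc ih =>
    obtain ⟨g, hg, rfl⟩ := ih
    have hac := hr g⁻¹ hbc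
    rw [inv_smul_smul] at hac
    obtain ⟨k, hk, hkc⟩ := h _ hac
    exact ⟨g * k, mul_mem hg hk, by rw [mul_smul, hkc, smul_inv_smul]⟩

end Action

section StepPolynomial

variable {K L : Type} [Field K] [Algebra ℂ K] [Field L] [Algebra ℂ L]
  {St : Finset (ℤ × ℤ)} {w : ℤ × ℤ → ℂ} {x y : K} {a b : K × K}

lemma transcendental_stepEval (hx : Transcendental ℂ x) (hy : Transcendental ℂ⟮x⟯ y)
    (hw : ∃ p ∈ St, w p ≠ 0 ∧ p.2 ≠ 0) : Transcendental ℂ⟮x⟯ (stepEval St w x y) := by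
  obtain ⟨p, hp, hwp, hp2⟩ := hw
  let g : ℂ⟮x⟯ := AdjoinSimple.gen ℂ x
  have hg : Transcendental ℂ g :=
    (transcendental_algebraMap_iff (algebraMap ℂ⟮x⟯ K).injective).1 hx
  let c : ℤ →₀ ℂ⟮x⟯ := ∑ q ∈ St, Finsupp.single q.2 (w q • g ^ q.1)
  have c_value : Finsupp.linearCombination ℂ⟮x⟯ (fun n : ℤ => y ^ n) c = stepEval St w x y := by
    simp only [c, map_sum, Finsupp.linearCombination_single, stepEval]
    refine Finset.sum_congr rfl fun q _ => ?_
    rw [smul_assoc, Algebra.smul_def, Algebra.smul_def, map_zpow₀, AdjoinSimple.algebraMap_gen,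
      mul_assoc]
  have c_apply : c p.2 = ∑ q ∈ St with q.2 = p.2, w q • g ^ q.1 := by
    simp only [c, Finsupp.finsetSum_apply, Finsupp.single_apply, Finset.sum_filter]
  rw [← c_value]
  exact transcendental_linearCombination_zpow hy hp2
    (c_apply ▸ sum_smul_zpow_ne_zero hg hp hwp)

lemma stepEval_mem {M : IntermediateField ℂ K} (hx : x ∈ M) (hy : y ∈ M) :
    stepEval St w x y ∈ M :=
  sum_mem fun _ _ => mul_mem (mul_mem (M.algebraMap_mem _) (zpow_mem hx _)) (zpow_mem hy _)

lemma transcendental_of_transcendental_stepEval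
    (h : Transcendental ℂ⟮x⟯ (stepEval St w x y)) : Transcendental ℂ⟮x⟯ y := by
  let M := (algebraicClosure ℂ⟮x⟯ K).restrictScalars ℂ
  have hx : x ∈ M := (algebraicClosure ℂ⟮x⟯ K).algebraMap_mem (AdjoinSimple.gen ℂ x)
  exact fun hy => h (mem_algebraicClosure_iff.1
    (stepEval_mem (M := M) hx (mem_algebraicClosure_iff.2 hy)))

lemma map_stepEval (φ : K →ₐ[ℂ] L) (u v : K) :
    φ (stepEval St w u v) = stepEval St w (φ u) (φ v) := by
  simp [stepEval]

lemma stepEval_swap (u v : K) :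
    stepEval (St.map (Equiv.prodComm ℤ ℤ).toEmbedding) (w ∘ Prod.swap) v u =
      stepEval St w u v := by
  simp [stepEval, mul_right_comm]

lemma exists_weight_ne_zero_and_ne_zero (hw : ∀ p ∈ St, w p ≠ 0) {f : ℤ × ℤ → ℤ}
    (h : ∃ p ∈ St, ∃ q ∈ St, f p ≠ f q) : ∃ p ∈ St, w p ≠ 0 ∧ f p ≠ 0 := by
  obtain ⟨p, hp, q, hq, hpq⟩ := h
  by_cases hp0 : f p = 0
  · exact ⟨q, hq, hw q hq, hp0 ▸ hpq.symm⟩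
  · exact ⟨p, hp, hw p hp, hp0⟩

lemma exists_algEquiv_of_xAdj [IsAlgClosed K] (hw : ∃ p ∈ St, w p ≠ 0 ∧ p.2 ≠ 0)
    (hxy : AlgebraicIndependent ℂ ![x, y]) (hb : XAdj St w (x, y) b) :
    ∃ φ : K ≃ₐ[ℂ] K, (φ x, φ y) = b := by
  obtain ⟨u, v⟩ := b
  obtain ⟨rfl : x = u, hS : stepEval St w x y = stepEval St w x v⟩ := hb
  have hy : Transcendental ℂ⟮x⟯ y := transcendental_adjoin_of_pair hxy
  have hv : Transcendental ℂ⟮x⟯ v := transcendental_of_transcendental_stepEval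
    (hS ▸ transcendental_stepEval (hxy.transcendental 0) hy hw)
  obtain ⟨φ, hφ⟩ := exists_algEquiv_apply_eq_of_transcendental hy hv
  exact ⟨φ.restrictScalars ℂ, Prod.ext (φ.commutes (AdjoinSimple.gen ℂ x)) hφ⟩

lemma exists_algEquiv_of_yAdj [IsAlgClosed K] (hw : ∃ p ∈ St, w p ≠ 0 ∧ p.1 ≠ 0)
    (hxy : AlgebraicIndependent ℂ ![x, y]) (hb : YAdj St w (x, y) b) :
    ∃ φ : K ≃ₐ[ℂ] K, (φ x, φ y) = b := by
  obtain ⟨p, hp, hwp⟩ := hw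
  have hb' : XAdj (St.map (Equiv.prodComm ℤ ℤ).toEmbedding) (w ∘ Prod.swap) (y, x) b.swap :=
    ⟨hb.1, by simpa only [stepEval_swap, Prod.fst_swap, Prod.snd_swap] using hb.2⟩
  obtain ⟨φ, hφ⟩ := exists_algEquiv_of_xAdj ⟨p.swap, by simpa using hp, by simpa using hwp⟩
    (algebraicIndependent_pair_swap hxy) hb'
  exact ⟨φ, congrArg Prod.swap hφ⟩

end StepPolynomial

section Orbit

variable {K L : Type} [Field K] [Algebra ℂ K] [Field L] [Algebra ℂ L]
  {St : Finset (ℤ × ℤ)} {w : ℤ × ℤ → ℂ} {x y : K} {a b : K × K}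

lemma xAdj_map_iff (φ : K →ₐ[ℂ] L) :
    XAdj St w (Prod.map φ φ a) (Prod.map φ φ b) ↔ XAdj St w a b := by
  have hφ : Function.Injective φ := φ.toRingHom.injective
  simp only [XAdj, Prod.map_fst, Prod.map_snd, ← map_stepEval, hφ.eq_iff]

lemma yAdj_map_iff (φ : K →ₐ[ℂ] L) :
    YAdj St w (Prod.map φ φ a) (Prod.map φ φ b) ↔ YAdj St w a b := by
  have hφ : Function.Injective φ := φ.toRingHom.injective
  simp only [YAdj, Prod.map_fst, Prod.map_snd, ← map_stepEval, hφ.eq_iff]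

lemma adj_map_iff (φ : K →ₐ[ℂ] L) :
    Adj St w (Prod.map φ φ a) (Prod.map φ φ b) ↔ Adj St w a b :=
  or_congr (xAdj_map_iff φ) (yAdj_map_iff φ)

lemma Adj.symm (h : Adj St w a b) : Adj St w b a :=
  h.imp (fun h => ⟨h.1.symm, h.2.symm⟩) (fun h => ⟨h.1.symm, h.2.symm⟩)

lemma reflTransGen_adj_map (φ : K →ₐ[ℂ] L) (h : Relation.ReflTransGen (Adj St w) a b) :
    Relation.ReflTransGen (Adj St w) (Prod.map φ φ a) (Prod.map φ φ b) :=
  Relation.ReflTransGen.lift (Prod.map φ φ) (fun _ _ => (adj_map_iff φ).2) _ _ h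

lemma symm_apply_mem_orbit {φ : K ≃ₐ[ℂ] K} (h : (φ x, φ y) ∈ orbit St w x y) :
    (φ.symm x, φ.symm y) ∈ orbit St w x y := by
  have : Std.Symm (Adj (K := K) St w) := ⟨fun _ _ => Adj.symm⟩
  have h' := reflTransGen_adj_map (φ.symm : K →ₐ[ℂ] K)
    (symm_of (Relation.ReflTransGen (Adj St w)) h)
  rwa [Prod.map_apply, Prod.map_apply, AlgEquiv.coe_toAlgHom, φ.symm_apply_apply,
    φ.symm_apply_apply] at h'

lemma coords_mem_orbitF (ha : a ∈ orbit St w x y) :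
    a.1 ∈ orbitF St w x y ∧ a.2 ∈ orbitF St w x y :=
  ⟨subset_adjoin ℂ _ (Or.inr ⟨a, ha, Or.inl rfl⟩), subset_adjoin ℂ _ (Or.inr ⟨a, ha, Or.inr rfl⟩)⟩

lemma orbitF_map_le {φ : K →ₐ[ℂ] K} (h : (φ x, φ y) ∈ orbit St w x y) :
    (orbitF St w x y).map φ ≤ orbitF St w x y := by
  rw [orbitF, IntermediateField.adjoin_map, adjoin_le_iff]
  rintro _ ⟨z, rfl | ⟨a, ha, hz⟩, rfl⟩
  · exact map_stepEval φ x y ▸ stepEval_mem (coords_mem_orbitF h).1 (coords_mem_orbitF h).2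
  · have hφa := coords_mem_orbitF (Relation.ReflTransGen.trans h (reflTransGen_adj_map φ ha))
    rcases hz with rfl | rfl
    exacts [hφa.1, hφa.2]

lemma orbitF_map_eq {φ : K ≃ₐ[ℂ] K} (h : (φ x, φ y) ∈ orbit St w x y) :
    (orbitF St w x y).map (φ : K →ₐ[ℂ] K) = orbitF St w x y := by
  refine (orbitF_map_le h).antisymm fun z hz => ⟨φ.symm z, ?_, φ.apply_symm_apply z⟩
  exact orbitF_map_le (φ := (φ.symm : K →ₐ[ℂ] K)) (symm_apply_mem_orbit h) ⟨z, hz, rfl⟩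

variable (St w x y) in
/-- The point `(x, y)` of the orbit, with its coordinates in `k(𝒪)`, so that the automorphisms
of `k(𝒪)` act on it coordinate-wise through the action on `k(𝒪) × k(𝒪)`. -/
def basePt : orbitF St w x y × orbitF St w x y :=
  (⟨x, x_mem_orbitF St w x y⟩, ⟨y, y_mem_orbitF St w x y⟩)

lemma exists_reflTransGen_basePt (ha : a ∈ orbit St w x y) :
    ∃ c : orbitF St w x y × orbitF St w x y,
      Prod.map (orbitF St w x y).val (orbitF St w x y).val c = a ∧
        Relation.ReflTransGen (Adj St w) (basePt St w x y) c := by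
  induction ha with
  | refl => exact ⟨_, rfl, .refl⟩
  | @tail _ b ha hab ih =>
    obtain ⟨c, rfl, hc⟩ := ih
    obtain ⟨hb₁, hb₂⟩ := coords_mem_orbitF (Relation.ReflTransGen.tail ha hab)
    exact ⟨(⟨b.1, hb₁⟩, ⟨b.2, hb₂⟩), rfl, hc.tail ((adj_map_iff (orbitF St w x y).val).1 hab)⟩

end Orbit

section Group

variable {K : Type} [Field K] [Algebra ℂ K]
  {St : Finset (ℤ × ℤ)} {w : ℤ × ℤ → ℂ} {x y : K}

lemma adj_smul (σ : K ≃ₐ[ℂ] K) {a b : K × K} (h : Adj St w a b) : Adj St w (σ • a) (σ • b) :=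
  (adj_map_iff (σ : K →ₐ[ℂ] K)).2 h

lemma exists_smul_basePt_eq {φ : K ≃ₐ[ℂ] K} {c : orbitF St w x y × orbitF St w x y}
    (hφ : (φ x, φ y) = Prod.map (orbitF St w x y).val (orbitF St w x y).val c)
    (hc : Adj St w (basePt St w x y) c) :
    ∃ σ : orbitF St w x y ≃ₐ[ℂ] orbitF St w x y, σ • basePt St w x y = c := by
  have hmem : (φ x, φ y) ∈ orbit St w x y :=
    hφ ▸ .single ((adj_map_iff (orbitF St w x y).val).2 hc)
  exact ⟨(intermediateFieldMap φ _).trans (equivOfEq (orbitF_map_eq hmem)),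
    Prod.ext (Subtype.ext (congrArg Prod.fst hφ)) (Subtype.ext (congrArg Prod.snd hφ))⟩

lemma mem_fixingAuts_adjoin {M : IntermediateField ℂ K} {σ : M ≃ₐ[ℂ] M} {A : Set K}
    (hA : ∀ z ∈ A, ∃ hz : z ∈ M, σ ⟨z, hz⟩ = ⟨z, hz⟩) : σ ∈ fixingAuts (adjoin ℂ A) M := by
  have fixed : ∀ z ∈ adjoin ℂ A, ∃ hz : z ∈ M, σ ⟨z, hz⟩ = ⟨z, hz⟩ := by
    intro z hz
    induction hz using adjoin_induction with
    | mem z hz => exact hA z hz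
    | algebraMap r => exact ⟨M.algebraMap_mem r, σ.commutes r⟩
    | add a b _ _ ha hb =>
      exact ⟨add_mem ha.1 hb.1, (map_add σ ⟨a, _⟩ ⟨b, _⟩).trans (congrArg₂ _ ha.2 hb.2)⟩
    | inv a _ ha => exact ⟨inv_mem ha.1, (map_inv₀ σ ⟨a, _⟩).trans (congrArg _ ha.2)⟩
    | mul a b _ _ ha hb =>
      exact ⟨mul_mem ha.1 hb.1, (map_mul σ ⟨a, _⟩ ⟨b, _⟩).trans (congrArg₂ _ ha.2 hb.2)⟩
  exact fun z hz _ => (fixed z hz).2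

variable {σ τ : orbitF St w x y ≃ₐ[ℂ] orbitF St w x y}
  {c : orbitF St w x y × orbitF St w x y}

lemma apply_stepEval_eq_self
    (h : stepEval St w (basePt St w x y).1 (basePt St w x y).2 =
      stepEval St w (σ (basePt St w x y).1) (σ (basePt St w x y).2)) :
    σ ⟨stepEval St w x y, S_mem_orbitF St w x y⟩ = ⟨stepEval St w x y, S_mem_orbitF St w x y⟩ := by
  have hS : stepEval St w (basePt St w x y).1 (basePt St w x y).2 =
      ⟨stepEval St w x y, S_mem_orbitF St w x y⟩ :=
    Subtype.ext (map_stepEval (orbitF St w x y).val _ _)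
  rw [← hS]
  exact (map_stepEval σ.toAlgHom _ _).trans h.symm

lemma mem_Gx_of_xAdj (h : XAdj St w (basePt St w x y) (σ • basePt St w x y)) :
    σ ∈ Gx St w x y := by
  refine mem_fixingAuts_adjoin ?_
  rintro z (rfl | rfl)
  exacts [⟨x_mem_orbitF St w z y, h.1.symm⟩, ⟨_, apply_stepEval_eq_self h.2⟩]

lemma mem_Gy_of_yAdj (h : YAdj St w (basePt St w x y) (σ • basePt St w x y)) :
    σ ∈ Gy St w x y := by
  refine mem_fixingAuts_adjoin ?_
  rintro z (rfl | rfl)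
  exacts [⟨y_mem_orbitF St w x z, h.1.symm⟩, ⟨_, apply_stepEval_eq_self h.2⟩]

lemma exists_mem_Gx_smul_basePt_eq [IsAlgClosed K] (hw : ∃ p ∈ St, w p ≠ 0 ∧ p.2 ≠ 0)
    (hxy : AlgebraicIndependent ℂ ![x, y]) (hc : XAdj St w (basePt St w x y) c) :
    ∃ σ ∈ Gx St w x y, σ • basePt St w x y = c := by
  obtain ⟨φ, hφ⟩ := exists_algEquiv_of_xAdj hw hxy ((xAdj_map_iff (orbitF St w x y).val).2 hc)
  obtain ⟨σ, rfl⟩ := exists_smul_basePt_eq hφ (Or.inl hc)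
  exact ⟨σ, mem_Gx_of_xAdj hc, rfl⟩

lemma exists_mem_Gy_smul_basePt_eq [IsAlgClosed K] (hw : ∃ p ∈ St, w p ≠ 0 ∧ p.1 ≠ 0)
    (hxy : AlgebraicIndependent ℂ ![x, y]) (hc : YAdj St w (basePt St w x y) c) :
    ∃ σ ∈ Gy St w x y, σ • basePt St w x y = c := by
  obtain ⟨φ, hφ⟩ := exists_algEquiv_of_yAdj hw hxy ((yAdj_map_iff (orbitF St w x y).val).2 hc)
  obtain ⟨σ, rfl⟩ := exists_smul_basePt_eq hφ (Or.inr hc)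
  exact ⟨σ, mem_Gy_of_yAdj hc, rfl⟩

lemma smul_basePt_eq_of_inv_mul_mem_Gxy (h : σ⁻¹ * τ ∈ Gxy St w x y) :
    τ • basePt St w x y = σ • basePt St w x y := by
  rw [← inv_smul_eq_iff, ← mul_smul]
  exact Prod.ext (h x (subset_adjoin ℂ _ (Or.inl rfl)) _) (h y (subset_adjoin ℂ _ (Or.inr rfl)) _)

end Group

theorem stmt7_general {K : Type} [Field K] [Algebra ℂ K] [IsAlgClosed K]
    {St : Finset (ℤ × ℤ)} {w : ℤ × ℤ → ℂ} {x y : K} (hxy : AlgebraicIndependent ℂ ![x, y])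
    (hX : ∃ p ∈ St, w p ≠ 0 ∧ p.1 ≠ 0) (hY : ∃ p ∈ St, w p ≠ 0 ∧ p.2 ≠ 0)
    {Ix Iy : Set (orbitF St w x y ≃ₐ[ℂ] orbitF St w x y)}
    (hIx : ∀ σ ∈ Gx St w x y, ∃ τ ∈ Ix, σ⁻¹ * τ ∈ Gxy St w x y)
    (hIy : ∀ σ ∈ Gy St w x y, ∃ τ ∈ Iy, σ⁻¹ * τ ∈ Gxy St w x y) :
    ∀ a ∈ orbit St w x y, ∃ σ ∈ Subgroup.closure (Ix ∪ Iy),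
      ((σ ⟨x, x_mem_orbitF St w x y⟩ : orbitF St w x y) : K) = a.1 ∧
      ((σ ⟨y, y_mem_orbitF St w x y⟩ : orbitF St w x y) : K) = a.2 := by
  have step : ∀ c, Adj St w (basePt St w x y) c →
      ∃ τ ∈ Subgroup.closure (Ix ∪ Iy), τ • basePt St w x y = c := by
    rintro c (hc | hc)
    · obtain ⟨σ, hσ, rfl⟩ := exists_mem_Gx_smul_basePt_eq hY hxy hc
      obtain ⟨τ, hτ, hστ⟩ := hIx σ hσ
      exact ⟨τ, Subgroup.subset_closure (Or.inl hτ), smul_basePt_eq_of_inv_mul_mem_Gxy hστ⟩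
    · obtain ⟨σ, hσ, rfl⟩ := exists_mem_Gy_smul_basePt_eq hX hxy hc
      obtain ⟨τ, hτ, hστ⟩ := hIy σ hσ
      exact ⟨τ, Subgroup.subset_closure (Or.inr hτ), smul_basePt_eq_of_inv_mul_mem_Gxy hστ⟩
  intro a ha
  obtain ⟨c, rfl, hc⟩ := exists_reflTransGen_basePt ha
  obtain ⟨σ, hσ, rfl⟩ := exists_smul_eq_of_reflTransGen adj_smul step hc
  exact ⟨σ, hσ, rfl, rfl⟩

/-- for any systems of representatives `I_x`, `I_y` of the left cosets
of `G_{xy}` in `G_x`, resp. `G_y`, the subgroup generated by `I_x ∪ I_y` acts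
transitively on the orbit. -/
theorem stmt7 {K : Type} [Field K] [Algebra ℂ K]
    (St : Finset (ℤ × ℤ)) (w : ℤ × ℤ → ℂ) (x y : K)
    (hset : Setting St w x y)
    (Ix Iy : Set (↥(orbitF St w x y) ≃ₐ[ℂ] ↥(orbitF St w x y)))
    (hIx : Ix ⊆ (Gx St w x y : Set (↥(orbitF St w x y) ≃ₐ[ℂ] ↥(orbitF St w x y))))
    (hIx' : ∀ σ ∈ Gx St w x y, ∃! τ, τ ∈ Ix ∧ σ⁻¹ * τ ∈ Gxy St w x y)
    (hIy : Iy ⊆ (Gy St w x y : Set (↥(orbitF St w x y) ≃ₐ[ℂ] ↥(orbitF St w x y))))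
    (hIy' : ∀ σ ∈ Gy St w x y, ∃! τ, τ ∈ Iy ∧ σ⁻¹ * τ ∈ Gxy St w x y) :
    ∀ a ∈ orbit St w x y, ∃ σ ∈ Subgroup.closure (Ix ∪ Iy),
      ((σ ⟨x, x_mem_orbitF St w x y⟩ : orbitF St w x y) : K) = a.1 ∧
      ((σ ⟨y, y_mem_orbitF St w x y⟩ : orbitF St w x y) : K) = a.2 := by
  have := hset.algClosed
  exact stmt7_general hset.indep (exists_weight_ne_zero_and_ne_zero hset.weight_ne hset.notUniv.1)
    (exists_weight_ne_zero_and_ne_zero hset.weight_ne hset.notUniv.2)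
    (fun σ hσ => (hIx' σ hσ).exists) (fun σ hσ => (hIy' σ hσ).exists)

end QuadrantWalk
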